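/- If an agent i rejects a packing X by proposing (X \ X_rej) ∪ X_int, then i also rejects X using the canonical rejection set X'_rej = {A ∈ X : A intersects some set of X_int}, i.e., (X \ X'_rej) ∪ X_int is pairwise disjoint and covers at least as many elements of U_i as (X \ X_rej) ∪ X_int does, hence strictly more than X. -/

import Mathlib

open Finset

variable {α : Type*} [DecidableEq α] {ι : Type*} [Fintype ι] [DecidableEq ι]

/-- A collection of finsets is pairwise disjoint. -/
def PairwiseDisj (X : Finset (Finset α)) : Prop :=
  (X : Set (Finset α)).PairwiseDisjoint id

/-- Number of elements of `Ui` covered by the packing `X`. -/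
def covOf (Ui : Finset α) (X : Finset (Finset α)) : ℕ :=
  ((X.biUnion id) ∩ Ui).card

/-- `Hs` is a hitting set of the set system `S`. -/
def IsHitting (S : Finset (Finset α)) (Hs : Finset α) : Prop :=
  ∀ A ∈ S, (A ∩ Hs).Nonempty

/-- `F` is a sunflower with core `Y`: pairwise intersections all equal `Y`,
and all petals are nonempty. -/
def IsSunflower (F : Finset (Finset α)) (Y : Finset α) : Prop :=
  (∀ A ∈ F, ∀ B ∈ F, A ≠ B → A ∩ B = Y) ∧ ∀ A ∈ F, (A \ Y).Nonempty

/-- Agent `i` rejects the packing `X` (with respect to the collection `S` and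
partition `U`): it can remove a subfamily `Xrej` and add `i`-internal sets `Xint`
from `S` so that the result is pairwise disjoint and covers strictly more of `U i`. -/
def Rejects (U : ι → Finset α) (S : Finset (Finset α)) (i : ι)
    (X : Finset (Finset α)) : Prop :=
  ∃ Xrej ⊆ X, ∃ Xint : Finset (Finset α),
    (∀ A ∈ Xint, A ∈ S ∧ A ⊆ U i) ∧
    PairwiseDisj ((X \ Xrej) ∪ Xint) ∧
    covOf (U i) X < covOf (U i) ((X \ Xrej) ∪ Xint)

/-- A packing is rejection-proof if no agent rejects it. -/
def RejectionProof (U : ι → Finset α) (S : Finset (Finset α))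
    (X : Finset (Finset α)) : Prop :=
  ∀ i, ¬ Rejects U S i X

/-!
Let `Z` be any pairwise disjoint family between `Y` and `X ∪ Y`. A member of `Z` outside `Y` lies
in `X` and is disjoint from every member of `Y`, so removing from `X` only the sets that meet `Y`
keeps it. Hence the canonical alternative is the greatest such family, and a greatest family has
the greatest coverage.
-/

section Conflicting

variable {P : Type*} [PartialOrder P] [OrderBot P] [DecidableRel (Disjoint : P → P → Prop)]

/-- The canonical rejection set of the packing `X` for the new family `Y`: the members of `X` that
meet some member of `Y`. A nonempty set in `X ∩ Y` conflicts with itself, so it is removed here and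
comes back only with `Y`. -/
def conflicting (X Y : Finset P) : Finset P :=
  X.filter fun A => ∃ B ∈ Y, ¬ Disjoint A B

variable [DecidableEq P] {X Y Z : Finset P}

lemma mem_sdiff_conflicting {A : P} :
    A ∈ X \ conflicting X Y ↔ A ∈ X ∧ ∀ B ∈ Y, Disjoint A B := by
  simp +contextual [conflicting]

lemma pairwiseDisjoint_sdiff_conflicting_union (hX : (X : Set P).PairwiseDisjoint id)
    (hY : (Y : Set P).PairwiseDisjoint id) :
    ((X \ conflicting X Y ∪ Y : Finset P) : Set P).PairwiseDisjoint id := by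
  rw [coe_union]
  exact (hX.subset (coe_subset.2 sdiff_subset)).union hY fun A hA B hB _ =>
    (mem_sdiff_conflicting.1 hA).2 B hB

lemma subset_sdiff_conflicting_union (hYZ : Y ⊆ Z) (hZXY : Z ⊆ X ∪ Y)
    (hZ : (Z : Set P).PairwiseDisjoint id) : Z ⊆ X \ conflicting X Y ∪ Y := by
  intro A hA
  by_cases hAY : A ∈ Y
  · exact mem_union_right _ hAY
  · have hAX : A ∈ X := (mem_union.1 (hZXY hA)).resolve_right hAY
    have hA_disj : ∀ B ∈ Y, Disjoint A B := fun B hB =>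
      hZ hA (hYZ hB) (ne_of_mem_of_not_mem hB hAY).symm
    exact mem_union_left _ (mem_sdiff_conflicting.2 ⟨hAX, hA_disj⟩)

theorem isGreatest_sdiff_conflicting_union (hX : (X : Set P).PairwiseDisjoint id)
    (hY : (Y : Set P).PairwiseDisjoint id) :
    IsGreatest {Z : Finset P | Y ⊆ Z ∧ Z ⊆ X ∪ Y ∧ (Z : Set P).PairwiseDisjoint id}
      (X \ conflicting X Y ∪ Y) :=
  ⟨⟨subset_union_right, union_subset_union_left sdiff_subset,
      pairwiseDisjoint_sdiff_conflicting_union hX hY⟩,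
    fun _ ⟨hYZ, hZXY, hZ⟩ => subset_sdiff_conflicting_union hYZ hZXY hZ⟩

theorem stmt14_general {β : Type*} [Preorder β] {c : Finset P → β} (hc : Monotone c)
    {R : Finset P} (hX : (X : Set P).PairwiseDisjoint id)
    (halt : ((X \ R ∪ Y : Finset P) : Set P).PairwiseDisjoint id)
    (hgain : c X < c (X \ R ∪ Y)) :
    ((X \ conflicting X Y ∪ Y : Finset P) : Set P).PairwiseDisjoint id ∧
      c (X \ R ∪ Y) ≤ c (X \ conflicting X Y ∪ Y) ∧
      c X < c (X \ conflicting X Y ∪ Y) := by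
  have hY : (Y : Set P).PairwiseDisjoint id := halt.subset (coe_subset.2 subset_union_right)
  obtain ⟨⟨-, -, hdisj⟩, hmax⟩ := isGreatest_sdiff_conflicting_union hX hY
  have hle : c (X \ R ∪ Y) ≤ c (X \ conflicting X Y ∪ Y) :=
    hc (hmax ⟨subset_union_right, union_subset_union_left sdiff_subset, halt⟩)
  exact ⟨hdisj, hle, hgain.trans_le hle⟩

end Conflicting

lemma covOf_mono (V : Finset α) : Monotone (covOf V) := fun _ _ hXY =>
  card_le_card (inter_subset_inter_right (biUnion_subset_biUnion_of_subset_left _ hXY))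

/-- Canonical rejections: if agent i rejects X via (X \ Xrej) ∪ Xint, then the
canonical rejection set (sets of X meeting Xint) also witnesses a rejection, with
at least as much coverage of U i. -/
theorem stmt14 {α : Type*} [DecidableEq α] {ι : Type*} [DecidableEq ι]
    (U : ι → Finset α) (hU : ∀ i j : ι, i ≠ j → Disjoint (U i) (U j))
    (S : Finset (Finset α)) (i : ι)
    (X : Finset (Finset α)) (hXS : X ⊆ S) (hdisj : PairwiseDisj X)
    (Xrej : Finset (Finset α)) (hrej : Xrej ⊆ X)
    (Xint : Finset (Finset α)) (hint : ∀ A ∈ Xint, A ∈ S ∧ A ⊆ U i)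
    (halt : PairwiseDisj ((X \ Xrej) ∪ Xint))
    (hgain : covOf (U i) X < covOf (U i) ((X \ Xrej) ∪ Xint)) :
    PairwiseDisj ((X \ X.filter (fun A => ∃ B ∈ Xint, ¬ Disjoint A B)) ∪ Xint) ∧
    covOf (U i) ((X \ Xrej) ∪ Xint) ≤
      covOf (U i) ((X \ X.filter (fun A => ∃ B ∈ Xint, ¬ Disjoint A B)) ∪ Xint) ∧
    covOf (U i) X <
      covOf (U i) ((X \ X.filter (fun A => ∃ B ∈ Xint, ¬ Disjoint A B)) ∪ Xint) := by
  exact stmt14_general (covOf_mono (U i)) hdisj halt hgain
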